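/- Let T > 1. There exists a constant C > 0 such that every classical solution u of the one-dimensional wave equation on [0,T]×[−1,1] with Dirichlet boundary conditions whose initial data are supported in [−1/4,1/4] satisfies ∫_{−1}^{1} ( (∂ₓu(0,x))² + (∂ₜu(0,x))² ) dx ≤ C ∫_0^T ∫_ω (∂ₜu(t,x))² dx dt, where ω = (−1,−3/4) ∪ (3/4,1). -/

import Mathlib

open MeasureTheory

/-- Partial derivative in time of a function of (time, space). -/
noncomputable def pdt (u : ℝ → ℝ → ℝ) : ℝ → ℝ → ℝ := fun t x => deriv (fun s => u s x) t

/-- Partial derivative in space of a function of (time, space). -/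
noncomputable def pdx (u : ℝ → ℝ → ℝ) : ℝ → ℝ → ℝ := fun t x => deriv (fun y => u t y) x

lemma cs_aux (h : ℝ → ℝ) (hc : Continuous h) (a b : ℝ) (hab : a < b) :
    (∫ x in a..b, h x) ^ 2 ≤ (b - a) * ∫ x in a..b, h x ^ 2 := by
  set m := ∫ x in a..b, h x with hm
  have hba : 0 < b - a := by linarith
  have h0 : 0 ≤ ∫ x in a..b, ((b - a) * h x - m) ^ 2 :=
    intervalIntegral.integral_nonneg hab.le (fun x _ => sq_nonneg _)
  have h1 : ∫ x in a..b, ((b - a) * h x - m) ^ 2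
      = (b - a) ^ 2 * (∫ x in a..b, h x ^ 2) - 2 * (b - a) * m * m + (b - a) * m ^ 2 := by
    have : (fun x => ((b - a) * h x - m) ^ 2)
        = fun x => ((b - a) ^ 2 * h x ^ 2 - 2 * (b - a) * m * h x) + m ^ 2 := by
      funext x; ring
    rw [this, intervalIntegral.integral_add, intervalIntegral.integral_sub,
      intervalIntegral.integral_const_mul, intervalIntegral.integral_const_mul,
      intervalIntegral.integral_const, smul_eq_mul, ← hm]
    all_goals exact Continuous.intervalIntegrable (by fun_prop) _ _
  rw [h1] at h0
  have h2 : 0 ≤ (b - a) * ((b - a) * (∫ x in a..b, h x ^ 2) - m ^ 2) := by nlinarith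
  have := nonneg_of_mul_nonneg_right h2 hba
  linarith

lemma core_pt (T e y : ℝ) (he : 0 < e) (he1 : e ≤ 1 / 8) (heT : 1 + e ≤ T)
    (hy : y ∈ Set.Icc (-(1 / 4) : ℝ) (1 / 4)) (f : ℝ → ℝ → ℝ)
    (hf : Continuous (Function.uncurry f)) (w : ℝ)
    (hw : w * (e ^ 3 / 6) = ∫ x in (3 / 4 : ℝ)..(3 / 4 + e),
      (2 * ((x - 3 / 4) * (3 / 4 + e - x)) * f (x - y) x
        + (3 / 2 + e - 2 * x) * ∫ τ in (0 : ℝ)..(x - y), f τ x)) :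
    w ^ 2 ≤ 36 / e ^ 6 * (8 * (∫ x in (3 / 4 : ℝ)..(3 / 4 + e), f (x - y) x ^ 2)
      + 2 * T * ∫ x in (3 / 4 : ℝ)..(3 / 4 + e), ∫ τ in (0 : ℝ)..T, f τ x ^ 2) := by
  have hab : (3 / 4 : ℝ) < 3 / 4 + e := by linarith
  have hf1 : ∀ x, Continuous fun τ => f τ x := fun x =>
    hf.comp (by fun_prop : Continuous fun τ : ℝ => (τ, x))
  have hf2 : Continuous fun x => f (x - y) x :=
    hf.comp (by fun_prop : Continuous fun x : ℝ => (x - y, x))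
  have hfs : Continuous (Function.uncurry fun x τ => f τ x) :=
    hf.comp (by fun_prop : Continuous fun p : ℝ × ℝ => (p.2, p.1))
  have hA : Continuous fun x => ∫ τ in (0 : ℝ)..T, |f τ x| :=
    intervalIntegral.continuous_parametric_intervalIntegral_of_continuous' (f := fun x τ => |f τ x|)
      (by exact continuous_abs.comp hfs) 0 T
  have hB : Continuous fun x => ∫ τ in (0 : ℝ)..T, f τ x ^ 2 :=
    intervalIntegral.continuous_parametric_intervalIntegral_of_continuous' (f := fun x τ => f τ x ^ 2)
      (by exact (continuous_pow 2).comp hfs) 0 T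
  have hG : Continuous fun x => ∫ τ in (0 : ℝ)..(x - y), f τ x :=
    intervalIntegral.continuous_parametric_intervalIntegral_of_continuous (f := fun x τ => f τ x)
      hfs (by fun_prop)
  set h : ℝ → ℝ := fun x => 2 * |f (x - y) x| + ∫ τ in (0 : ℝ)..T, |f τ x| with hh
  have hhc : Continuous h := by fun_prop
  have h1 : |w * (e ^ 3 / 6)| ≤ ∫ x in (3 / 4 : ℝ)..(3 / 4 + e), h x := by
    rw [hw]
    refine (intervalIntegral.abs_integral_le_integral_abs hab.le).trans ?_
    apply intervalIntegral.integral_mono_on hab.le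
    · exact Continuous.intervalIntegrable (by fun_prop) _ _
    · exact hhc.intervalIntegrable _ _
    intro x hx
    obtain ⟨hx1, hx2⟩ := hx
    obtain ⟨hy1, hy2⟩ := hy
    refine (abs_add_le _ _).trans ?_
    rw [abs_mul (2 * ((x - 3 / 4) * (3 / 4 + e - x))), abs_mul 2, abs_mul (3 / 2 + e - 2 * x)]
    have p1 : |(x - 3 / 4) * (3 / 4 + e - x)| ≤ 1 := by
      rw [abs_of_nonneg (mul_nonneg (by linarith) (by linarith))]; nlinarith
    have p2 : |3 / 2 + e - 2 * x| ≤ 1 := by rw [abs_le]; constructor <;> linarith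
    have p3 : |∫ τ in (0 : ℝ)..(x - y), f τ x| ≤ ∫ τ in (0 : ℝ)..T, |f τ x| := by
      refine (intervalIntegral.abs_integral_le_integral_abs (by linarith)).trans ?_
      exact intervalIntegral.integral_mono_interval le_rfl (by linarith) (by linarith)
        (Filter.Eventually.of_forall fun _ => abs_nonneg _)
        ((continuous_abs.comp (hf1 x)).intervalIntegrable _ _)
    have q1 := mul_le_mul_of_nonneg_right p1 (abs_nonneg (f (x - y) x))
    have q2 := mul_le_mul p2 p3 (abs_nonneg _) zero_le_one
    simp only [hh, abs_two]
    nlinarith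
  have h2 : (w * (e ^ 3 / 6)) ^ 2 ≤ (∫ x in (3 / 4 : ℝ)..(3 / 4 + e), h x) ^ 2 :=
    sq_le_sq.mpr (h1.trans (le_abs_self _))
  have h3 := cs_aux h hhc _ _ hab
  have h4 : ∫ x in (3 / 4 : ℝ)..(3 / 4 + e), h x ^ 2 ≤
      ∫ x in (3 / 4 : ℝ)..(3 / 4 + e), (8 * f (x - y) x ^ 2
        + 2 * T * ∫ τ in (0 : ℝ)..T, f τ x ^ 2) := by
    apply intervalIntegral.integral_mono_on hab.le
    · exact (hhc.pow 2).intervalIntegrable _ _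
    · exact Continuous.intervalIntegrable (by fun_prop) _ _
    intro x _
    have c := cs_aux (fun τ => |f τ x|) (continuous_abs.comp (hf1 x)) 0 T (by linarith)
    simp only [sq_abs, sub_zero] at c
    simp only [hh]
    have := sq_abs (f (x - y) x)
    nlinarith [sq_nonneg (2 * |f (x - y) x| - ∫ τ in (0 : ℝ)..T, |f τ x|)]
  rw [intervalIntegral.integral_add, intervalIntegral.integral_const_mul,
    intervalIntegral.integral_const_mul] at h4
  rotate_left
  · exact Continuous.intervalIntegrable (by fun_prop) _ _
  · exact Continuous.intervalIntegrable (by fun_prop) _ _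
  have h5 : 0 ≤ ∫ x in (3 / 4 : ℝ)..(3 / 4 + e), h x ^ 2 :=
    intervalIntegral.integral_nonneg hab.le (fun x _ => sq_nonneg _)
  rw [div_mul_eq_mul_div, le_div_iff₀ (by positivity)]
  have h6 : (w * (e ^ 3 / 6)) ^ 2 = w ^ 2 * e ^ 6 / 36 := by ring
  nlinarith

lemma core (T e : ℝ) (he : 0 < e) (he1 : e ≤ 1 / 8) (heT : 1 + e ≤ T)
    (f : ℝ → ℝ → ℝ) (hf : Continuous (Function.uncurry f)) (W : ℝ → ℝ)
    (hW : ContinuousOn W (Set.Icc (-(1 / 4) : ℝ) (1 / 4)))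
    (hw : ∀ y ∈ Set.Icc (-(1 / 4) : ℝ) (1 / 4),
      W y * (e ^ 3 / 6) = ∫ x in (3 / 4 : ℝ)..(3 / 4 + e),
      (2 * ((x - 3 / 4) * (3 / 4 + e - x)) * f (x - y) x
        + (3 / 2 + e - 2 * x) * ∫ τ in (0 : ℝ)..(x - y), f τ x)) :
    ∫ y in (-(1 / 4) : ℝ)..(1 / 4), W y ^ 2 ≤ 36 / e ^ 6 * (8 + T) *
      ∫ t in (0 : ℝ)..T, ∫ x in (3 / 4 : ℝ)..1, f t x ^ 2 := by
  have hab : (3 / 4 : ℝ) < 3 / 4 + e := by linarith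
  have hfs : Continuous (Function.uncurry fun x τ => f τ x) :=
    hf.comp (by fun_prop : Continuous fun p : ℝ × ℝ => (p.2, p.1))
  have hfsq : Continuous (Function.uncurry fun t x => f t x ^ 2) := (continuous_pow 2).comp hf
  have hfssq : Continuous (Function.uncurry fun x t => f t x ^ 2) := (continuous_pow 2).comp hfs
  have hsk : Continuous (Function.uncurry fun y x => f (x - y) x ^ 2) :=
    hfsq.comp (by fun_prop : Continuous fun p : ℝ × ℝ => (p.2 - p.1, p.2))
  have hB : Continuous fun x => ∫ τ in (0 : ℝ)..T, f τ x ^ 2 :=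
    intervalIntegral.continuous_parametric_intervalIntegral_of_continuous' hfssq 0 T
  have hS : Continuous fun y => ∫ x in (3 / 4 : ℝ)..(3 / 4 + e), f (x - y) x ^ 2 :=
    intervalIntegral.continuous_parametric_intervalIntegral_of_continuous' hsk _ _
  set J := ∫ x in (3 / 4 : ℝ)..(3 / 4 + e), ∫ τ in (0 : ℝ)..T, f τ x ^ 2 with hJ
  have s1 : ∫ y in (-(1 / 4) : ℝ)..(1 / 4), W y ^ 2 ≤
      ∫ y in (-(1 / 4) : ℝ)..(1 / 4), 36 / e ^ 6 *
        (8 * (∫ x in (3 / 4 : ℝ)..(3 / 4 + e), f (x - y) x ^ 2) + 2 * T * J) := by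
    apply intervalIntegral.integral_mono_on (by norm_num)
    · apply ContinuousOn.intervalIntegrable
      rw [Set.uIcc_of_le (by norm_num)]
      exact hW.pow 2
    · exact Continuous.intervalIntegrable (by fun_prop) _ _
    intro y hy
    exact core_pt T e y he he1 heT hy f hf (W y) (hw y hy)
  rw [intervalIntegral.integral_const_mul, intervalIntegral.integral_add,
    intervalIntegral.integral_const_mul, intervalIntegral.integral_const] at s1
  rotate_left
  · exact Continuous.intervalIntegrable (by fun_prop) _ _
  · exact Continuous.intervalIntegrable (by fun_prop) _ _
  have sw : ∀ (g : ℝ → ℝ → ℝ), Continuous (Function.uncurry g) → ∀ a b c d : ℝ,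
      ∫ y in a..b, ∫ x in c..d, g y x = ∫ x in c..d, ∫ y in a..b, g y x := by
    intro g hg a b c d
    apply MeasureTheory.intervalIntegral_intervalIntegral_swap
    apply (hg.continuousOn.integrableOn_compact
      (isCompact_uIcc.prod isCompact_uIcc : IsCompact (Set.uIcc a b ×ˢ Set.uIcc c d))).mono_set
    exact Set.prod_mono Set.uIoc_subset_uIcc Set.uIoc_subset_uIcc
  have s2 : ∫ y in (-(1 / 4) : ℝ)..(1 / 4), ∫ x in (3 / 4 : ℝ)..(3 / 4 + e), f (x - y) x ^ 2
      ≤ J := by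
    rw [sw (fun y x => f (x - y) x ^ 2) hsk]
    have hB' : Continuous fun x => ∫ y in (-(1 / 4) : ℝ)..(1 / 4), f (x - y) x ^ 2 :=
      intervalIntegral.continuous_parametric_intervalIntegral_of_continuous'
       (f := fun x y => f (x - y) x ^ 2)
        (hsk.comp (by fun_prop : Continuous fun p : ℝ × ℝ => (p.2, p.1))) _ _
    apply intervalIntegral.integral_mono_on hab.le (hB'.intervalIntegrable _ _)
      (hB.intervalIntegrable _ _)
    intro x hx
    obtain ⟨hx1, hx2⟩ := hx
    rw [intervalIntegral.integral_comp_sub_left (fun t => f t x ^ 2) x]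
    exact intervalIntegral.integral_mono_interval (by linarith) (by linarith) (by linarith)
        (Filter.Eventually.of_forall fun _ => sq_nonneg _)
        ((hfsq.comp (by fun_prop : Continuous fun τ : ℝ => (τ, x))).intervalIntegrable _ _)
  have s3 : J ≤ ∫ t in (0 : ℝ)..T, ∫ x in (3 / 4 : ℝ)..1, f t x ^ 2 := by
    rw [sw (fun t x => f t x ^ 2) hfsq]
    exact intervalIntegral.integral_mono_interval le_rfl (by linarith) (by linarith)
        (Filter.Eventually.of_forall fun x =>
          intervalIntegral.integral_nonneg (by linarith) (fun _ _ => sq_nonneg _))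
        (hB.intervalIntegrable _ _)
  refine s1.trans ?_
  rw [mul_assoc (36 / e ^ 6)]
  apply mul_le_mul_of_nonneg_left _ (by positivity)
  simp only [smul_eq_mul]
  nlinarith

noncomputable def vR (T : ℝ) (u : ℝ → ℝ → ℝ) (y : ℝ) : ℝ :=
  derivWithin (fun s => u s y) (Set.Icc 0 T) 0

noncomputable def LL (T : ℝ) (u : ℝ → ℝ → ℝ) (p : ℝ × ℝ) : ℝ × ℝ →L[ℝ] ℝ :=
  fderivWithin ℝ (Function.uncurry u) (Set.Icc 0 T ×ˢ Set.Icc (-1 : ℝ) 1) p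

section reg
variable {T : ℝ} {u : ℝ → ℝ → ℝ}

lemma LL_cont (hT : 0 < T)
    (hu : ContDiffOn ℝ 2 (Function.uncurry u) (Set.Icc 0 T ×ˢ Set.Icc (-1 : ℝ) 1)) :
    ContinuousOn (LL T u) (Set.Icc 0 T ×ˢ Set.Icc (-1 : ℝ) 1) :=
  hu.continuousOn_fderivWithin
    ((uniqueDiffOn_Icc hT).prod (uniqueDiffOn_Icc (by norm_num))) (by norm_num)

lemma LL_has
    (hu : ContDiffOn ℝ 2 (Function.uncurry u) (Set.Icc 0 T ×ˢ Set.Icc (-1 : ℝ) 1))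
    {p : ℝ × ℝ} (hp : p ∈ Set.Icc 0 T ×ˢ Set.Icc (-1 : ℝ) 1) :
    HasFDerivWithinAt (Function.uncurry u) (LL T u p) (Set.Icc 0 T ×ˢ Set.Icc (-1 : ℝ) 1) p :=
  (hu.differentiableOn (by norm_num) p hp).hasFDerivWithinAt

lemma LL_t
    (hu : ContDiffOn ℝ 2 (Function.uncurry u) (Set.Icc 0 T ×ˢ Set.Icc (-1 : ℝ) 1))
    {t x : ℝ} (ht : t ∈ Set.Icc 0 T) (hx : x ∈ Set.Icc (-1 : ℝ) 1) :
    HasDerivWithinAt (fun s => u s x) (LL T u (t, x) (1, 0)) (Set.Icc 0 T) t := by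
  have h := LL_has hu (p := (t, x)) ⟨ht, hx⟩
  have h2 : HasDerivWithinAt (fun s : ℝ => (s, x)) ((1 : ℝ), (0 : ℝ)) (Set.Icc 0 T) t :=
    (hasDerivWithinAt_id _ _).prodMk (hasDerivWithinAt_const _ _ _)
  exact HasFDerivWithinAt.comp_hasDerivWithinAt (f := fun s : ℝ => (s, x)) t h h2
    (fun s hs => Set.mk_mem_prod hs hx)

lemma LL_x
    (hu : ContDiffOn ℝ 2 (Function.uncurry u) (Set.Icc 0 T ×ˢ Set.Icc (-1 : ℝ) 1))
    {t x : ℝ} (ht : t ∈ Set.Icc 0 T) (hx : x ∈ Set.Icc (-1 : ℝ) 1) :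
    HasDerivWithinAt (fun y => u t y) (LL T u (t, x) (0, 1)) (Set.Icc (-1) 1) x := by
  have h := LL_has hu (p := (t, x)) ⟨ht, hx⟩
  have h2 : HasDerivWithinAt (fun s : ℝ => (t, s)) ((0 : ℝ), (1 : ℝ)) (Set.Icc (-1) 1) x :=
    (hasDerivWithinAt_const _ _ _).prodMk (hasDerivWithinAt_id _ _)
  exact HasFDerivWithinAt.comp_hasDerivWithinAt (f := fun s : ℝ => (t, s)) x h h2
    (fun s hs => Set.mk_mem_prod ht hs)

lemma pdt_eq
    (hu : ContDiffOn ℝ 2 (Function.uncurry u) (Set.Icc 0 T ×ˢ Set.Icc (-1 : ℝ) 1))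
    {t x : ℝ} (ht : t ∈ Set.Ioo 0 T) (hx : x ∈ Set.Icc (-1 : ℝ) 1) :
    pdt u t x = LL T u (t, x) (1, 0) :=
  ((LL_t hu (Set.Ioo_subset_Icc_self ht) hx).hasDerivAt (Icc_mem_nhds ht.1 ht.2)).deriv

lemma pdx_eq
    (hu : ContDiffOn ℝ 2 (Function.uncurry u) (Set.Icc 0 T ×ˢ Set.Icc (-1 : ℝ) 1))
    {t x : ℝ} (ht : t ∈ Set.Icc 0 T) (hx : x ∈ Set.Ioo (-1 : ℝ) 1) :
    pdx u t x = LL T u (t, x) (0, 1) :=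
  ((LL_x hu ht (Set.Ioo_subset_Icc_self hx)).hasDerivAt (Icc_mem_nhds hx.1 hx.2)).deriv

lemma vR_eq (hT : 0 < T)
    (hu : ContDiffOn ℝ 2 (Function.uncurry u) (Set.Icc 0 T ×ˢ Set.Icc (-1 : ℝ) 1))
    {x : ℝ} (hx : x ∈ Set.Icc (-1 : ℝ) 1) :
    vR T u x = LL T u (0, x) (1, 0) :=
  (LL_t hu ⟨le_rfl, hT.le⟩ hx).derivWithin (uniqueDiffOn_Icc hT 0 ⟨le_rfl, hT.le⟩)

lemma pdt_zero (hT : 0 < T) (x : ℝ) : (pdt u 0 x) ^ 2 ≤ (vR T u x) ^ 2 := by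
  by_cases h : DifferentiableAt ℝ (fun s => u s x) 0
  · have : vR T u x = pdt u 0 x :=
      h.hasDerivAt.hasDerivWithinAt.derivWithin (uniqueDiffOn_Icc hT 0 ⟨le_rfl, hT.le⟩)
    rw [this]
  · have : pdt u 0 x = 0 := deriv_zero_of_not_differentiableAt h
    rw [this, zero_pow two_ne_zero]; exact sq_nonneg _

lemma second
    (hu : ContDiffOn ℝ 2 (Function.uncurry u) (Set.Icc 0 T ×ˢ Set.Icc (-1 : ℝ) 1))
    {t x : ℝ} (ht : t ∈ Set.Ioo 0 T) (hx : x ∈ Set.Ioo (-1 : ℝ) 1)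
    (hw : pdt (pdt u) t x = pdx (pdx u) t x) :
    ∃ M : ℝ × ℝ →L[ℝ] (ℝ × ℝ →L[ℝ] ℝ), HasFDerivAt (LL T u) M (t, x) ∧
      M (1, 1) (1, 0) = M (1, 1) (0, 1) := by
  have hn : Set.Icc 0 T ×ˢ Set.Icc (-1 : ℝ) 1 ∈ nhds (t, x) :=
    prod_mem_nhds (Icc_mem_nhds ht.1 ht.2) (Icc_mem_nhds hx.1 hx.2)
  have hc : ContDiffAt ℝ 2 (Function.uncurry u) (t, x) := hu.contDiffAt hn
  have hev : LL T u =ᶠ[nhds (t, x)] fderiv ℝ (Function.uncurry u) := by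
    filter_upwards [eventually_mem_nhds_iff.mpr hn] with p hp
    exact fderivWithin_of_mem_nhds hp
  have hd : DifferentiableAt ℝ (fderiv ℝ (Function.uncurry u)) (t, x) :=
    (hc.fderiv_right (m := 1) (by norm_num)).differentiableAt (by norm_num)
  have hL : HasFDerivAt (LL T u) (fderiv ℝ (fderiv ℝ (Function.uncurry u)) (t, x)) (t, x) :=
    hd.hasFDerivAt.congr_of_eventuallyEq hev
  have hs : IsSymmSndFDerivAt ℝ (Function.uncurry u) (t, x) :=
    hc.isSymmSndFDerivAt (by simp)
  have hs' := hs (1, 0) (0, 1)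
  set M := fderiv ℝ (fderiv ℝ (Function.uncurry u)) (t, x) with hM
  refine ⟨M, hL, ?_⟩
  have e1 : pdt (pdt u) t x = M (1, 0) (1, 0) := by
    have k : (fun s => pdt u s x) =ᶠ[nhds t] fun s => LL T u (s, x) (1, 0) := by
      filter_upwards [Ioo_mem_nhds ht.1 ht.2] with s hs
      exact pdt_eq hu hs (Set.Ioo_subset_Icc_self hx)
    have h2 : HasDerivAt (fun s : ℝ => (s, x)) ((1 : ℝ), (0 : ℝ)) t :=
      (hasDerivAt_id _).prodMk (hasDerivAt_const _ _)
    have h3 := (HasFDerivAt.comp_hasDerivAt (f := fun s : ℝ => (s, x)) t hL h2).clm_apply (hasDerivAt_const t ((1 : ℝ), (0 : ℝ)))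
    have h4 := (h3.congr_of_eventuallyEq k).deriv
    simpa [pdt] using h4
  have e2 : pdx (pdx u) t x = M (0, 1) (0, 1) := by
    have k : (fun y => pdx u t y) =ᶠ[nhds x] fun y => LL T u (t, y) (0, 1) := by
      filter_upwards [Ioo_mem_nhds hx.1 hx.2] with s hs
      exact pdx_eq hu (Set.Ioo_subset_Icc_self ht) hs
    have h2 : HasDerivAt (fun s : ℝ => (t, s)) ((0 : ℝ), (1 : ℝ)) x :=
      (hasDerivAt_const _ _).prodMk (hasDerivAt_id _)
    have h3 := (HasFDerivAt.comp_hasDerivAt (f := fun s : ℝ => (t, s)) x hL h2).clm_apply (hasDerivAt_const x ((0 : ℝ), (1 : ℝ)))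
    have h4 := (h3.congr_of_eventuallyEq k).deriv
    simpa [pdx] using h4
  have e3 : ((1 : ℝ), (1 : ℝ)) = (1, 0) + (0, 1) := by simp
  rw [e3, map_add, ContinuousLinearMap.add_apply, ContinuousLinearMap.add_apply]
  rw [← e1, ← e2, hw, hs']
  ring

lemma transport (hT : 0 < T)
    (hu : ContDiffOn ℝ 2 (Function.uncurry u) (Set.Icc 0 T ×ˢ Set.Icc (-1 : ℝ) 1))
    (hw : ∀ t ∈ Set.Icc (0 : ℝ) T, ∀ x ∈ Set.Icc (-1 : ℝ) 1, pdt (pdt u) t x = pdx (pdx u) t x)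
    {y S : ℝ} (hy : -1 < y) (hS : 0 < S) (hST : S ≤ T) (hyS : y + S ≤ 1) :
    LL T u (S, y + S) (1, 0) - LL T u (S, y + S) (0, 1)
      = LL T u (0, y) (1, 0) - LL T u (0, y) (0, 1) := by
  set g : ℝ → ℝ := fun s => LL T u (s, y + s) (1, 0) - LL T u (s, y + s) (0, 1) with hg
  have hc : ContinuousOn g (Set.Icc 0 S) := by
    have h1 : ContinuousOn (fun s => LL T u (s, y + s)) (Set.Icc 0 S) :=
      (LL_cont hT hu).comp (by fun_prop) (fun s hs =>
        ⟨⟨hs.1, hs.2.trans hST⟩, ⟨by linarith [hs.1], by linarith [hs.2]⟩⟩)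
    exact (h1.clm_apply continuousOn_const).sub (h1.clm_apply continuousOn_const)
  have hd : ∀ s ∈ Set.Ioo 0 S, HasDerivAt g 0 s := by
    intro s hs
    have a1 : s ∈ Set.Ioo 0 T := ⟨hs.1, hs.2.trans_le hST⟩
    have a2 : y + s ∈ Set.Ioo (-1 : ℝ) 1 := ⟨by linarith [hs.1], by linarith [hs.2]⟩
    obtain ⟨M, hM, hM2⟩ := second hu a1 a2
      (hw s (Set.Ioo_subset_Icc_self a1) _ (Set.Ioo_subset_Icc_self a2))
    have h2 : HasDerivAt (fun s : ℝ => (s, y + s)) ((1 : ℝ), (1 : ℝ)) s :=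
      (hasDerivAt_id _).prodMk ((hasDerivAt_id s).const_add y)
    have h3 := HasFDerivAt.comp_hasDerivAt (f := fun s : ℝ => (s, y + s)) s hM h2
    have h4 := (h3.clm_apply (hasDerivAt_const s ((1 : ℝ), (0 : ℝ)))).sub
      (h3.clm_apply (hasDerivAt_const s ((0 : ℝ), (1 : ℝ))))
    refine HasDerivAt.congr_deriv h4 ?_
    simp [hM2]
  obtain ⟨c, _, hc2⟩ := exists_hasDerivAt_eq_slope g (fun _ => 0) hS hc hd
  have : g S - g 0 = 0 := by
    rw [eq_comm, div_eq_zero_iff] at hc2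
    rcases hc2 with h | h
    · exact h
    · linarith
  simp only [hg, add_zero] at this
  linarith

noncomputable def cl (a b x : ℝ) : ℝ := max a (min b x)

lemma cl_mem {a b : ℝ} (h : a ≤ b) (x : ℝ) : cl a b x ∈ Set.Icc a b :=
  ⟨le_max_left _ _, max_le h (min_le_left _ _)⟩

lemma cl_eq {a b x : ℝ} (h : x ∈ Set.Icc a b) : cl a b x = x := by
  rw [cl, min_eq_right h.2, max_eq_right h.1]

lemma cl_cont (a b : ℝ) : Continuous (cl a b) := by unfold cl; fun_prop

lemma side {e : ℝ} (he : 0 < e) (he1 : e ≤ 1 / 8) (heT : 1 + e ≤ T)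
    (hu : ContDiffOn ℝ 2 (Function.uncurry u) (Set.Icc 0 T ×ˢ Set.Icc (-1 : ℝ) 1))
    (hw : ∀ t ∈ Set.Icc (0 : ℝ) T, ∀ x ∈ Set.Icc (-1 : ℝ) 1, pdt (pdt u) t x = pdx (pdx u) t x)
    (h0 : ∀ x ∈ Set.Icc (3 / 4 : ℝ) 1, u 0 x = 0) :
    ContinuousOn (fun y => vR T u y - pdx u 0 y) (Set.Icc (-(1 / 4) : ℝ) (1 / 4)) ∧
    ∫ y in (-(1 / 4) : ℝ)..(1 / 4), (vR T u y - pdx u 0 y) ^ 2 ≤ 36 / e ^ 6 * (8 + T) *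
      ∫ t in Set.Ioo (0 : ℝ) T, ∫ x in Set.Ioo (3 / 4 : ℝ) 1, (pdt u t x) ^ 2 := by
  have hT : 0 < T := by linarith
  have hm0 : (0 : ℝ) ∈ Set.Icc 0 T := ⟨le_rfl, hT.le⟩
  set f : ℝ → ℝ → ℝ := fun t x => LL T u (cl 0 T t, cl (-1) 1 x) (1, 0) with hfdef
  have hf : Continuous (Function.uncurry f) := by
    have h1 : Continuous fun p : ℝ × ℝ => LL T u (cl 0 T p.1, cl (-1) 1 p.2) :=
      (LL_cont hT hu).comp_continuous
        (((cl_cont _ _).comp continuous_fst).prodMk ((cl_cont _ _).comp continuous_snd))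
        (fun p => ⟨cl_mem hT.le _, cl_mem (by norm_num) _⟩)
    exact h1.clm_apply continuous_const
  have hfe : ∀ t ∈ Set.Icc 0 T, ∀ x ∈ Set.Icc (-1 : ℝ) 1, f t x = LL T u (t, x) (1, 0) := by
    intro t ht x hx
    simp only [hfdef, cl_eq ht, cl_eq hx]
  have hWe : ∀ y ∈ Set.Icc (-(1 / 4) : ℝ) (1 / 4), vR T u y - pdx u 0 y
      = LL T u (0, y) (1, 0) - LL T u (0, y) (0, 1) := by
    intro y hy
    rw [vR_eq hT hu ⟨by linarith [hy.1], by linarith [hy.2]⟩,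
      pdx_eq hu hm0 ⟨by linarith [hy.1], by linarith [hy.2]⟩]
  have hWc : ContinuousOn (fun y => vR T u y - pdx u 0 y) (Set.Icc (-(1 / 4) : ℝ) (1 / 4)) := by
    refine ContinuousOn.congr ?_ hWe
    have h1 : ContinuousOn (fun s : ℝ => LL T u (0, s)) (Set.Icc (-(1 / 4) : ℝ) (1 / 4)) :=
      (LL_cont hT hu).comp (by fun_prop) (fun s hs =>
        ⟨hm0, ⟨by linarith [hs.1], by linarith [hs.2]⟩⟩)
    exact (h1.clm_apply continuousOn_const).sub (h1.clm_apply continuousOn_const)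
  refine ⟨hWc, ?_⟩
  have key := core T e he he1 heT f hf _ hWc ?_
  · refine key.trans (le_of_eq ?_)
    congr 1
    rw [intervalIntegral.integral_of_le hT.le, integral_Ioc_eq_integral_Ioo]
    apply setIntegral_congr_fun measurableSet_Ioo
    intro t ht
    simp only
    rw [intervalIntegral.integral_of_le (by norm_num), integral_Ioc_eq_integral_Ioo]
    apply setIntegral_congr_fun measurableSet_Ioo
    intro x hx
    have hx' : x ∈ Set.Icc (-1 : ℝ) 1 := ⟨by linarith [hx.1], hx.2.le⟩
    simp only
    rw [hfe t (Set.Ioo_subset_Icc_self ht) x hx', pdt_eq hu ht hx']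
  intro y hy
  rw [hWe y hy]
  set w := LL T u (0, y) (1, 0) - LL T u (0, y) (0, 1) with hwdef
  obtain ⟨hy1, hy2⟩ := hy
  have hab : (3 / 4 : ℝ) ≤ 3 / 4 + e := by linarith
  -- bounds
  have hmt : ∀ x ∈ Set.Icc (3 / 4 : ℝ) (3 / 4 + e), x - y ∈ Set.Icc 0 T := fun x hx =>
    ⟨by linarith [hx.1], by linarith [hx.2]⟩
  have hmx : ∀ x ∈ Set.Icc (3 / 4 : ℝ) (3 / 4 + e), x ∈ Set.Icc (-1 : ℝ) 1 := fun x hx =>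
    ⟨by linarith [hx.1], by linarith [hx.2]⟩
  -- time integration
  have hti : ∀ x ∈ Set.Icc (3 / 4 : ℝ) (3 / 4 + e), ∫ τ in (0 : ℝ)..(x - y), f τ x = u (x - y) x := by
    intro x hx
    have hxm := hmx x hx
    have htm := hmt x hx
    rw [intervalIntegral.integral_eq_sub_of_hasDerivAt_of_le (f := fun s => u s x) htm.1]
    · simp [h0 x ⟨hx.1, hxm.2⟩]
    · intro s hs
      exact ((LL_t hu ⟨hs.1, hs.2.trans htm.2⟩ hxm).continuousWithinAt).mono
        (Set.Icc_subset_Icc le_rfl htm.2)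
    · intro s hs
      have hs' : s ∈ Set.Ioo 0 T := ⟨hs.1, hs.2.trans_le htm.2⟩
      rw [hfe s (Set.Ioo_subset_Icc_self hs') x hxm]
      exact (LL_t hu (Set.Ioo_subset_Icc_self hs') hxm).hasDerivAt (Icc_mem_nhds hs'.1 hs'.2)
    · exact (hf.comp (by fun_prop : Continuous fun τ : ℝ => (τ, x))).intervalIntegrable _ _
  have hfs : Continuous (Function.uncurry fun x τ => f τ x) :=
    hf.comp (by fun_prop : Continuous fun p : ℝ × ℝ => (p.2, p.1))
  have hG : Continuous fun x => ∫ τ in (0 : ℝ)..(x - y), f τ x :=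
    intervalIntegral.continuous_parametric_intervalIntegral_of_continuous (f := fun x τ => f τ x)
      hfs (by fun_prop)
  have hf2 : Continuous fun x => f (x - y) x :=
    hf.comp (by fun_prop : Continuous fun x : ℝ => (x - y, x))
  -- the primitive
  have hprim : ∫ x in (3 / 4 : ℝ)..(3 / 4 + e),
      ((2 * ((x - 3 / 4) * (3 / 4 + e - x)) * f (x - y) x
        + (3 / 2 + e - 2 * x) * ∫ τ in (0 : ℝ)..(x - y), f τ x)
        - w * ((x - 3 / 4) * (3 / 4 + e - x)))
      = 0 := by
    rw [intervalIntegral.integral_eq_sub_of_hasDerivAt_of_le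
      (f := fun x => ((x - 3 / 4) * (3 / 4 + e - x)) * u (x - y) x) hab]
    · simp
    · apply ContinuousOn.mul (by fun_prop)
      exact hG.continuousOn.congr (fun x hx => (hti x hx).symm)
    · intro x hx
      have hxi := Set.Ioo_subset_Icc_self hx
      have htm : x - y ∈ Set.Ioo 0 T := ⟨by linarith [hx.1], by linarith [hx.2]⟩
      have hxm : x ∈ Set.Ioo (-1 : ℝ) 1 := ⟨by linarith [hx.1], by linarith [hx.2]⟩
      rw [hti x hxi, hfe _ (hmt x hxi) x (hmx x hxi)]
      have tr := transport hT hu hw (y := y) (S := x - y) (by linarith) htm.1 htm.2.le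
        (by linarith [hxm.2])
      rw [← hwdef, add_sub_cancel] at tr
      have hn : Set.Icc 0 T ×ˢ Set.Icc (-1 : ℝ) 1 ∈ nhds (x - y, x) :=
        prod_mem_nhds (Icc_mem_nhds htm.1 htm.2) (Icc_mem_nhds hxm.1 hxm.2)
      have hF := (LL_has hu (p := (x - y, x)) ⟨hmt x hxi, hmx x hxi⟩).hasFDerivAt hn
      have h2 : HasDerivAt (fun s : ℝ => (s - y, s)) ((1 : ℝ), (1 : ℝ)) x :=
        ((hasDerivAt_id x).sub_const y).prodMk (hasDerivAt_id _)
      have h3 : HasDerivAt (fun s => u (s - y) s) (LL T u (x - y, x) (1, 1)) x :=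
        HasFDerivAt.comp_hasDerivAt (f := fun s : ℝ => (s - y, s)) x hF h2
      have h4 : HasDerivAt (fun x : ℝ => (x - 3 / 4) * (3 / 4 + e - x))
          (1 * (3 / 4 + e - x) + (x - 3 / 4) * (-1)) x :=
        ((hasDerivAt_id x).sub_const (3 / 4)).mul ((hasDerivAt_id x).const_sub (3 / 4 + e))
      refine HasDerivAt.congr_deriv (h4.mul h3) ?_
      have e3 : ((1 : ℝ), (1 : ℝ)) = (1, 0) + (0, 1) := by simp
      rw [e3, map_add, ← tr]
      ring
    · exact Continuous.intervalIntegrable (by fun_prop) _ _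
  rw [intervalIntegral.integral_sub, intervalIntegral.integral_const_mul] at hprim
  rotate_left
  · exact Continuous.intervalIntegrable (by fun_prop) _ _
  · exact Continuous.intervalIntegrable (by fun_prop) _ _
  have hφ : ∫ x in (3 / 4 : ℝ)..(3 / 4 + e), (x - 3 / 4) * (3 / 4 + e - x) = e ^ 3 / 6 := by
    rw [intervalIntegral.integral_eq_sub_of_hasDerivAt (f := fun x : ℝ =>
      e * (x - 3 / 4) ^ 2 / 2 - (x - 3 / 4) ^ 3 / 3)]
    · ring
    · intro x _
      have := ((((hasDerivAt_id x).sub_const (3 / 4)).pow 2).const_mul e |>.div_const 2).sub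
        ((((hasDerivAt_id x).sub_const (3 / 4)).pow 3).div_const 3)
      refine HasDerivAt.congr_deriv this ?_
      simp
      ring
    · exact Continuous.intervalIntegrable (by fun_prop) _ _
  rw [hφ] at hprim
  linarith

end reg

lemma refl_pdx (u : ℝ → ℝ → ℝ) (t x : ℝ) :
    pdx (fun t x => u t (-x)) t x = - pdx u t (-x) := by
  simp only [pdx]
  exact deriv_comp_neg (fun y => u t y) x

lemma refl_pdx2 (u : ℝ → ℝ → ℝ) (t x : ℝ) :
    pdx (pdx (fun t x => u t (-x))) t x = pdx (pdx u) t (-x) := by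
  have : pdx (fun t x => u t (-x)) = fun t x => - pdx u t (-x) := by
    funext t x; exact refl_pdx u t x
  rw [this]
  have h : pdx (fun t x => - pdx u t (-x)) t x = - pdx (fun t x => pdx u t (-x)) t x := by
    simp only [pdx]
    exact deriv.fun_neg
  rw [h, refl_pdx, neg_neg]

theorem observability_1d_localized (T : ℝ) (hT : 1 < T) :
    ∃ C : ℝ, 0 < C ∧
      ∀ u : ℝ → ℝ → ℝ,
        -- u is of class C² on [0,T] × [−1,1]
        ContDiffOn ℝ 2 (Function.uncurry u) (Set.Icc 0 T ×ˢ Set.Icc (-1 : ℝ) 1) →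
        -- u solves the wave equation on [0,T] × [−1,1]
        (∀ t ∈ Set.Icc (0 : ℝ) T, ∀ x ∈ Set.Icc (-1 : ℝ) 1,
          pdt (pdt u) t x = pdx (pdx u) t x) →
        -- Dirichlet boundary conditions
        (∀ t ∈ Set.Icc (0 : ℝ) T, u t (-1) = 0 ∧ u t 1 = 0) →
        -- initial data supported in [−1/4, 1/4]
        (∀ x : ℝ, 1 / 4 ≤ |x| → |x| ≤ 1 → u 0 x = 0 ∧ pdt u 0 x = 0) →
        -- observability inequality
        ∫ x in Set.Ioo (-1 : ℝ) 1, ((pdx u 0 x) ^ 2 + (pdt u 0 x) ^ 2) ≤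
          C * ∫ t in Set.Ioo (0 : ℝ) T,
                ∫ x in (Set.Ioo (-1 : ℝ) (-3 / 4) ∪ Set.Ioo (3 / 4 : ℝ) 1),
                  (pdt u t x) ^ 2 := by
  set e := min (T - 1) (1 / 8) with hedef
  have he : 0 < e := lt_min (by linarith) (by norm_num)
  have he1 : e ≤ 1 / 8 := min_le_right _ _
  have heT : 1 + e ≤ T := by linarith [min_le_left (T - 1) (1 / 8 : ℝ)]
  have hT0 : 0 < T := by linarith
  set C := 36 / e ^ 6 * (8 + T) with hC
  have hCpos : 0 < C := by positivity
  refine ⟨C, hCpos, ?_⟩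
  intro u hu hw _ hs
  obtain ⟨c1, i1⟩ := side he he1 heT hu hw (fun x hx =>
    (hs x (by rw [abs_of_nonneg (by linarith [hx.1])]; linarith [hx.1])
      (by rw [abs_of_nonneg (by linarith [hx.1])]; exact hx.2)).1)
  have hu' : ContDiffOn ℝ 2 (Function.uncurry fun t x => u t (-x))
      (Set.Icc 0 T ×ˢ Set.Icc (-1 : ℝ) 1) := by
    have : ContDiff ℝ 2 (fun p : ℝ × ℝ => (p.1, -p.2)) := by fun_prop
    exact hu.comp this.contDiffOn (fun p hp =>
      ⟨hp.1, ⟨by linarith [hp.2.2], by linarith [hp.2.1]⟩⟩)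
  obtain ⟨c2, i2⟩ := side (u := fun t x => u t (-x)) he he1 heT hu' (by
      intro t ht x hx
      rw [refl_pdx2]
      exact hw t ht (-x) ⟨by linarith [hx.2], by linarith [hx.1]⟩)
    (fun x hx => (hs (-x) (by rw [abs_neg, abs_of_nonneg (by linarith [hx.1])]; linarith [hx.1])
      (by rw [abs_neg, abs_of_nonneg (by linarith [hx.1])]; exact hx.2)).1)
  have r1 : ∀ y, vR T (fun t x => u t (-x)) y - pdx (fun t x => u t (-x)) 0 y
      = vR T u (-y) + pdx u 0 (-y) := by
    intro y
    rw [refl_pdx, sub_neg_eq_add]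
    rfl
  simp only [r1] at c2 i2
  rw [intervalIntegral.integral_comp_neg (fun y => (vR T u y + pdx u 0 y) ^ 2), neg_neg] at i2
  have c3 : ContinuousOn (fun y => vR T u y + pdx u 0 y) (Set.Icc (-(1 / 4) : ℝ) (1 / 4)) := by
    have := c2.comp (continuous_neg.continuousOn (s := Set.Icc (-(1 / 4) : ℝ) (1 / 4)))
      (fun y hy => ⟨by linarith [hy.2], by linarith [hy.1]⟩)
    refine this.congr (fun y _ => ?_)
    simp
  -- the observed quantity splits
  set f : ℝ → ℝ → ℝ := fun t x => LL T u (cl 0 T t, cl (-1) 1 x) (1, 0) with hfdef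
  have hf : Continuous (Function.uncurry f) := by
    have h1 : Continuous fun p : ℝ × ℝ => LL T u (cl 0 T p.1, cl (-1) 1 p.2) :=
      (LL_cont hT0 hu).comp_continuous
        (((cl_cont _ _).comp continuous_fst).prodMk ((cl_cont _ _).comp continuous_snd))
        (fun p => ⟨cl_mem hT0.le _, cl_mem (by norm_num) _⟩)
    exact h1.clm_apply continuous_const
  have hfsq : Continuous (Function.uncurry fun t x => f t x ^ 2) := (continuous_pow 2).comp hf
  have hfe : ∀ t ∈ Set.Ioo 0 T, ∀ x ∈ Set.Icc (-1 : ℝ) 1, pdt u t x = f t x := by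
    intro t ht x hx
    rw [pdt_eq hu ht hx]
    simp only [hfdef, cl_eq (Set.Ioo_subset_Icc_self ht), cl_eq hx]
  have hfi : ∀ t ∈ Set.Ioo 0 T, ∀ s ⊆ Set.Icc (-1 : ℝ) 1, MeasurableSet s →
      IntegrableOn (fun x => pdt u t x ^ 2) s := by
    intro t ht s hs hsm
    have h1 : IntegrableOn (fun x => f t x ^ 2) s :=
      ((hfsq.comp (by fun_prop : Continuous fun x : ℝ => (t, x))).continuousOn.integrableOn_compact
        isCompact_Icc).mono_set hs
    refine h1.congr_fun (fun x hx => ?_) hsm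
    simp only
    rw [hfe t ht x (hs hx)]
  have hti : ∀ a b : ℝ, -1 ≤ a → a ≤ b → b ≤ 1 →
      IntegrableOn (fun t => ∫ x in Set.Ioo a b, pdt u t x ^ 2) (Set.Ioo 0 T) := by
    intro a b ha hab hb
    have hc : Continuous fun t => ∫ x in a..b, f t x ^ 2 :=
      intervalIntegral.continuous_parametric_intervalIntegral_of_continuous' hfsq a b
    have h1 : IntegrableOn (fun t => ∫ x in a..b, f t x ^ 2) (Set.Ioo 0 T) :=
      (hc.continuousOn.integrableOn_compact isCompact_Icc).mono_set Set.Ioo_subset_Icc_self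
    refine h1.congr_fun (fun t ht => ?_) measurableSet_Ioo
    simp only
    rw [intervalIntegral.integral_of_le hab, integral_Ioc_eq_integral_Ioo]
    apply setIntegral_congr_fun measurableSet_Ioo
    intro x hx
    simp only
    rw [hfe t ht x ⟨by linarith [hx.1], by linarith [hx.2]⟩]
  have split : ∫ t in Set.Ioo (0 : ℝ) T,
      ∫ x in (Set.Ioo (-1 : ℝ) (-3 / 4) ∪ Set.Ioo (3 / 4 : ℝ) 1), (pdt u t x) ^ 2
      = (∫ t in Set.Ioo (0 : ℝ) T, ∫ x in Set.Ioo (-1 : ℝ) (-3 / 4), (pdt u t x) ^ 2)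
      + ∫ t in Set.Ioo (0 : ℝ) T, ∫ x in Set.Ioo (3 / 4 : ℝ) 1, (pdt u t x) ^ 2 := by
    rw [← integral_add (hti _ _ (by norm_num) (by norm_num) (by norm_num))
      (hti _ _ (by norm_num) (by norm_num) (by norm_num))]
    apply setIntegral_congr_fun measurableSet_Ioo
    intro t ht
    apply setIntegral_union _ measurableSet_Ioo
    · exact hfi t ht _ (fun x hx => ⟨by linarith [hx.1], by linarith [hx.2]⟩) measurableSet_Ioo
    · exact hfi t ht _ (fun x hx => ⟨by linarith [hx.1], by linarith [hx.2]⟩) measurableSet_Ioo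
    · rw [Set.disjoint_left]
      intro x h1 h2
      linarith [h1.2, h2.1]
  have r2 : ∫ t in Set.Ioo (0 : ℝ) T, ∫ x in Set.Ioo (3 / 4 : ℝ) 1,
        (pdt (fun t x => u t (-x)) t x) ^ 2
      = ∫ t in Set.Ioo (0 : ℝ) T, ∫ x in Set.Ioo (-1 : ℝ) (-3 / 4), (pdt u t x) ^ 2 := by
    congr 1
    funext t
    have : ∀ x, pdt (fun t x => u t (-x)) t x = pdt u t (-x) := fun x => rfl
    simp only [this]
    rw [← integral_Ioc_eq_integral_Ioo, ← integral_Ioc_eq_integral_Ioo,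
      ← intervalIntegral.integral_of_le (by norm_num),
      ← intervalIntegral.integral_of_le (by norm_num),
      intervalIntegral.integral_comp_neg (fun x => pdt u t x ^ 2)]
    norm_num
  rw [r2] at i2
  rw [split]
  -- left-hand side
  have hle : (-(1 / 4) : ℝ) ≤ 1 / 4 := by norm_num
  set g : ℝ → ℝ := fun y => ((vR T u y - pdx u 0 y) ^ 2 + (vR T u y + pdx u 0 y) ^ 2) / 2 with hg
  have hgc : ContinuousOn g (Set.Icc (-(1 / 4) : ℝ) (1 / 4)) :=
    ((c1.pow 2).add (c3.pow 2)).div_const 2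
  have hgi : IntegrableOn g (Set.Icc (-(1 / 4) : ℝ) (1 / 4)) :=
    hgc.integrableOn_compact isCompact_Icc
  have lhs1 : ∫ x in Set.Ioo (-1 : ℝ) 1, ((pdx u 0 x) ^ 2 + (pdt u 0 x) ^ 2)
      ≤ ∫ x in Set.Ioo (-1 : ℝ) 1, (Set.Icc (-(1 / 4) : ℝ) (1 / 4)).indicator g x := by
    apply integral_mono_of_nonneg
    · exact Filter.Eventually.of_forall fun x => by positivity
    · exact ((integrable_indicator_iff measurableSet_Icc).mpr hgi).integrableOn
    · rw [Filter.EventuallyLE, ae_restrict_iff' measurableSet_Ioo]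
      refine Filter.Eventually.of_forall fun x hx => ?_
      by_cases hxi : x ∈ Set.Icc (-(1 / 4) : ℝ) (1 / 4)
      · rw [Set.indicator_of_mem hxi]
        have := pdt_zero (u := u) hT0 x
        simp only [hg]
        nlinarith
      · rw [Set.indicator_of_notMem hxi]
        have hx1 : 1 / 4 < |x| := by
          by_contra hcon
          exact hxi (abs_le.mp (not_lt.mp hcon))
        have hx2 : |x| < 1 := abs_lt.mpr hx
        have h1 := (hs x hx1.le hx2.le).2
        have h2 : pdx u 0 x = 0 := by
          have hev : (fun y => u 0 y) =ᶠ[nhds x] fun _ => 0 := by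
            filter_upwards [continuous_abs.continuousAt.eventually_mem (Ioo_mem_nhds hx1 hx2)]
              with y hy
            exact (hs y hy.1.le hy.2.le).1
          simp only [pdx]
          rw [hev.deriv_eq]
          simp
        simp [h1, h2]
  have lhs2 : ∫ x in Set.Ioo (-1 : ℝ) 1, (Set.Icc (-(1 / 4) : ℝ) (1 / 4)).indicator g x
      = ∫ y in (-(1 / 4) : ℝ)..(1 / 4), g y := by
    rw [setIntegral_indicator measurableSet_Icc, intervalIntegral.integral_of_le hle,
      ← integral_Icc_eq_integral_Ioc]
    congr 2
    apply Set.inter_eq_right.mpr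
    exact fun x hx => ⟨by linarith [hx.1], by linarith [hx.2]⟩
  have lhs3 : ∫ y in (-(1 / 4) : ℝ)..(1 / 4), g y
      = ((∫ y in (-(1 / 4) : ℝ)..(1 / 4), (vR T u y - pdx u 0 y) ^ 2)
        + ∫ y in (-(1 / 4) : ℝ)..(1 / 4), (vR T u y + pdx u 0 y) ^ 2) / 2 := by
    rw [← intervalIntegral.integral_add, ← intervalIntegral.integral_div]
    · apply ContinuousOn.intervalIntegrable
      rw [Set.uIcc_of_le hle]; exact c1.pow 2
    · apply ContinuousOn.intervalIntegrable
      rw [Set.uIcc_of_le hle]; exact c3.pow 2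
  rw [lhs2, lhs3] at lhs1
  have n1 : 0 ≤ ∫ y in (-(1 / 4) : ℝ)..(1 / 4), (vR T u y - pdx u 0 y) ^ 2 :=
    intervalIntegral.integral_nonneg hle (fun x _ => sq_nonneg _)
  have n2 : 0 ≤ ∫ y in (-(1 / 4) : ℝ)..(1 / 4), (vR T u y + pdx u 0 y) ^ 2 :=
    intervalIntegral.integral_nonneg hle (fun x _ => sq_nonneg _)
  linarith
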